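/- For every super logic program P and every natural number n, P^n ⊆ P^{n+1}, i.e. the sequence (P^n) is monotonically increasing. -/

import Mathlib

/-!
`P^{n+1}` has the same models as `P` together with a set of implications
`not E1 ∧ … ∧ not Em → not E0`. The truth of these implications depends only on the default part
of an interpretation, and passing from a model to a smaller one leaves the default part unchanged.
Hence a model of `P` with the same default part as some model of `P^n` is itself a model of `P^n`
(`satTheory_PSeq_of_dflt_eq`).

Consequently, if `P^n ⊆ P^{n+1}`, every minimal model `M` of `P^{n+1}` is a minimal model of `P^n`:
a smaller model `N` of `P^n` would be a model of `P` with the default part of `M`, hence a model of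
`P^{n+1}`. So everything minimally entailed by `P^n` is minimally entailed by `P^{n+1}`, which
gives `P^{n+1} ⊆ P^{n+2}`. The inclusion `P^0 ⊆ P^1`, which starts the induction on `n`, holds because
program clauses belong to `L*_not`.
-/

/-- Formulas of the modal language `L_not` over the set `At` of objective atoms.
`not F` is the default negation atom for a formula `F` (arbitrary nesting allowed). -/
inductive Fml (At : Type) : Type
  | atom : At → Fml At
  | tru : Fml At
  | fls : Fml At
  | neg : Fml At → Fml At
  | conj : Fml At → Fml At → Fml At
  | disj : Fml At → Fml At → Fml At
  | impl : Fml At → Fml At → Fml At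
  | equiv : Fml At → Fml At → Fml At
  | not : Fml At → Fml At

/-- An interpretation of `L_not`: a truth value for every objective atom and for
every default atom `not F` (the latter treated as new propositional atoms). -/
structure Interp (At : Type) where
  obj : At → Prop
  dflt : Fml At → Prop

/-- Classical satisfaction of a formula by an interpretation. -/
def Interp.sat {At : Type} (I : Interp At) : Fml At → Prop
  | Fml.atom a => I.obj a
  | Fml.tru => True
  | Fml.fls => False
  | Fml.neg F => ¬ Interp.sat I F
  | Fml.conj F G => Interp.sat I F ∧ Interp.sat I G
  | Fml.disj F G => Interp.sat I F ∨ Interp.sat I G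
  | Fml.impl F G => Interp.sat I F → Interp.sat I G
  | Fml.equiv F G => (Interp.sat I F ↔ Interp.sat I G)
  | Fml.not F => I.dflt F

/-- `I` is a model of the theory `T`. -/
def Interp.satTheory {At : Type} (I : Interp At) (T : Set (Fml At)) : Prop :=
  ∀ F ∈ T, I.sat F

/-- A set `S` contains `T`, the axioms (CA) and (DA), and is closed under
classical propositional consequence and the invariance rule (IR). -/
def CnClosed {At : Type} (T S : Set (Fml At)) : Prop :=
  T ⊆ S ∧
  Fml.not Fml.fls ∈ S ∧
  Fml.neg (Fml.not Fml.tru) ∈ S ∧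
  (∀ F G : Fml At,
    Fml.equiv (Fml.not (Fml.disj F G)) (Fml.conj (Fml.not F) (Fml.not G)) ∈ S) ∧
  (∀ F : Fml At, (∀ I : Interp At, I.satTheory S → I.sat F) → F ∈ S) ∧
  (∀ F G : Fml At, Fml.equiv F G ∈ S → Fml.equiv (Fml.not F) (Fml.not G) ∈ S)

/-- `Cn_not(T)`: the smallest set of formulas containing `T`, the axioms (CA), (DA),
closed under propositional consequence and the invariance rule (IR). -/
def CnNot {At : Type} (T : Set (Fml At)) : Set (Fml At) :=
  ⋂₀ {S | CnClosed T S}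

/-- `M` is smaller than `N`: they agree on all default atoms and the objective atoms
true in `M` form a proper subset of those true in `N`. -/
def Smaller {At : Type} (M N : Interp At) : Prop :=
  M.dflt = N.dflt ∧ {a | M.obj a} ⊂ {a | N.obj a}

/-- `M` is a minimal model of `T`. -/
def IsMinModel {At : Type} (T : Set (Fml At)) (M : Interp At) : Prop :=
  M.satTheory T ∧ ∀ N : Interp At, N.satTheory T → ¬ Smaller N M

/-- `T ⊨_min F`: `F` is true in all minimal models of `T`. -/
def MinEntails {At : Type} (T : Set (Fml At)) (F : Fml At) : Prop :=
  ∀ M : Interp At, IsMinModel T M → M.sat F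

/-- `Td` is a static expansion of `T`. -/
def IsStaticExpansion {At : Type} (T Td : Set (Fml At)) : Prop :=
  Td = CnNot (T ∪ {G | ∃ F : Fml At, MinEntails Td (Fml.neg F) ∧ G = Fml.not F})

/-- `Tbar` is the least static expansion of `T`. -/
def IsLeastStaticExpansion {At : Type} (T Tbar : Set (Fml At)) : Prop :=
  IsStaticExpansion T Tbar ∧ ∀ Td : Set (Fml At), IsStaticExpansion T Td → Tbar ⊆ Td

/-- A clause of a super logic program:
`A1 ∨ … ∨ Ak ← B1 ∧ … ∧ Bm ∧ not C1 ∧ … ∧ not Cn`, where the `Ai` (head) and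
`Bi` (posBody) are objective atoms and the `Ci` (negBody) are finite
conjunctions of objective atoms. -/
structure Clause (At : Type) where
  head : List At
  posBody : List At
  negBody : List (List At)

/-- Valuations of the objective atoms (`Obj`). -/
abbrev ObjVal (At : Type) := At → Prop

/-- Valuations of the default atoms `not(p1 ∧ … ∧ pn)`, indexed by the list
`[p1, …, pn]` of atoms of the conjunction. -/
abbrev DefVal (At : Type) := List At → Prop

/-- `Def`: the valuations of the default atoms making `not(true)`
(the empty conjunction case) false. -/
def DefSet (At : Type) : Set (DefVal At) := {d | ¬ d []}

/-- Satisfaction of a clause by a reduced interpretation `I_obj ∪ I_def`. -/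
def satClause {At : Type} (Io : ObjVal At) (Id : DefVal At) (c : Clause At) : Prop :=
  ((∀ b ∈ c.posBody, Io b) ∧ (∀ C ∈ c.negBody, Id C)) → ∃ a ∈ c.head, Io a

/-- `I_obj ∪ I_def` is a model of the super program `P`. -/
def satProg {At : Type} (Io : ObjVal At) (Id : DefVal At) (P : Set (Clause At)) : Prop :=
  ∀ c ∈ P, satClause Io Id c

/-- `I_obj ∪ I_def` is a minimal model of `P`: it is a model and no model with the
same default part has a strictly smaller set of true objective atoms. -/
def IsMinModelProg {At : Type} (P : Set (Clause At)) (Io : ObjVal At) (Id : DefVal At) : Prop :=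
  satProg Io Id P ∧
  ∀ Io' : ObjVal At, satProg Io' Id P → ¬ ({a | Io' a} ⊂ {a | Io a})

/-- `I_def` is given by the set `O` of objective valuations:
`I_def ⊨ not(p1∧…∧pn)` iff every valuation in `O` satisfies `¬(p1∧…∧pn)`. -/
def givenBy {At : Type} (Id : DefVal At) (O : Set (ObjVal At)) : Prop :=
  ∀ E : List At, Id E ↔ ∀ Io ∈ O, ∃ p ∈ E, ¬ Io p

/-- The operator `Φ_P`: objective parts of minimal models of `P` whose default part
belongs to `D`. -/
def PhiOp {At : Type} (P : Set (Clause At)) (D : Set (DefVal At)) : Set (ObjVal At) :=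
  {Io | ∃ Id ∈ D, IsMinModelProg P Io Id}

/-- The operator `Ψ_P`: default valuations given by some nonempty subset of `O`
and extendable to a model of `P`. -/
def PsiOp {At : Type} (P : Set (Clause At)) (O : Set (ObjVal At)) : Set (DefVal At) :=
  {Id | Id ∈ DefSet At ∧
        (∃ O' ⊆ O, O'.Nonempty ∧ givenBy Id O') ∧
        (∃ Io : ObjVal At, satProg Io Id P)}

/-- The operator `Λ_P := Ψ_P ∘ Φ_P`. -/
def LamOp {At : Type} (P : Set (Clause At)) : Set (DefVal At) → Set (DefVal At) :=
  PsiOp P ∘ PhiOp P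

/-- The conjunction `p1 ∧ … ∧ pn` of a list of objective atoms
(the empty conjunction is `true`, a one-element list is just the atom). -/
def conjAtoms {At : Type} : List At → Fml At
  | [] => Fml.tru
  | [p] => Fml.atom p
  | p :: q :: ps => Fml.conj (Fml.atom p) (conjAtoms (q :: ps))

/-- Conjunction of a list of formulas. -/
def conjList {At : Type} : List (Fml At) → Fml At
  | [] => Fml.tru
  | [F] => F
  | F :: G :: Gs => Fml.conj F (conjList (G :: Gs))

/-- Disjunction `p1 ∨ … ∨ pk` of a list of objective atoms (empty = `false`). -/
def disjAtoms {At : Type} : List At → Fml At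
  | [] => Fml.fls
  | [p] => Fml.atom p
  | p :: q :: ps => Fml.disj (Fml.atom p) (disjAtoms (q :: ps))

/-- The default atom `not(p1 ∧ … ∧ pn)`, with `not(true)` (the case `n = 0`)
identified with `false`. -/
def notConj {At : Type} : List At → Fml At
  | [] => Fml.fls
  | p :: ps => Fml.not (conjAtoms (p :: ps))

/-- The formula of `L_not` corresponding to a program clause. -/
def Clause.toFml {At : Type} (c : Clause At) : Fml At :=
  Fml.impl (conjList (c.posBody.map Fml.atom ++ c.negBody.map notConj))
    (disjAtoms c.head)

/-- The default part of the reduct of a full interpretation `I`: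
its restriction to the default atoms `not(p1 ∧ … ∧ pn)`. -/
def reductDef {At : Type} (I : Interp At) : DefVal At :=
  fun E => I.dflt (conjAtoms E)

/-- `L*_not`: propositional formulas over the objective atoms and the default atoms
`not(p1 ∧ … ∧ pn)` with `n ≥ 1` (the atom `not(true)`, i.e. the case `n = 0`,
is identified with the constant `false`, which is available as `Fml.fls`). -/
inductive LStar {At : Type} : Fml At → Prop
  | atom (a : At) : LStar (Fml.atom a)
  | tru : LStar Fml.tru
  | fls : LStar Fml.fls
  | dflt (p : At) (ps : List At) : LStar (Fml.not (conjAtoms (p :: ps)))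
  | neg {F : Fml At} : LStar F → LStar (Fml.neg F)
  | conj {F G : Fml At} : LStar F → LStar G → LStar (Fml.conj F G)
  | disj {F G : Fml At} : LStar F → LStar G → LStar (Fml.disj F G)
  | impl {F G : Fml At} : LStar F → LStar G → LStar (Fml.impl F G)
  | equiv {F G : Fml At} : LStar F → LStar G → LStar (Fml.equiv F G)

/-- Classical propositional consequence within `L*_not`
(default atoms treated as new propositional atoms). -/
def CnStar {At : Type} (S : Set (Fml At)) : Set (Fml At) :=
  {F | LStar F ∧ ∀ I : Interp At, I.satTheory S → I.sat F}

/-- One step of the fixed point construction: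
`Cn(P ∪ {not E1 ∧ … ∧ not Em → not E0 : S ⊨_min ¬E1 ∧ … ∧ ¬Em → ¬E0})`,
where the `Ei` range over conjunctions of objective atoms, `E0` may be the empty
conjunction `true`, and `not(true)` is identified with `false`. -/
def PStep {At : Type} (P0 S : Set (Fml At)) : Set (Fml At) :=
  CnStar (P0 ∪
    {F | ∃ (Es : List (List At)) (E0 : List At),
      F = Fml.impl (conjList (Es.map notConj)) (notConj E0) ∧
      MinEntails S
        (Fml.impl (conjList (Es.map (fun E => Fml.neg (conjAtoms E))))
          (Fml.neg (conjAtoms E0)))})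

/-- The sequence `P^0 = P`, `P^{n+1} = PStep P (P^n)`. -/
def PSeq {At : Type} (P : Set (Clause At)) : ℕ → Set (Fml At)
  | 0 => Clause.toFml '' P
  | n + 1 => PStep (Clause.toFml '' P) (PSeq P n)

theorem LStar.conjList {At : Type} :
    ∀ {L : List (Fml At)}, (∀ F ∈ L, LStar F) → LStar (conjList L)
  | [], _ => LStar.tru
  | [F], h => h F (by simp)
  | F :: _ :: _, h =>
    LStar.conj (h F (by simp)) (LStar.conjList fun H hH => h H (List.mem_cons_of_mem _ hH))

theorem LStar.disjAtoms {At : Type} : ∀ L : List At, LStar (disjAtoms L)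
  | [] => LStar.fls
  | [p] => LStar.atom p
  | p :: q :: ps => LStar.disj (LStar.atom p) (LStar.disjAtoms (q :: ps))

theorem LStar.notConj {At : Type} : ∀ L : List At, LStar (notConj L)
  | [] => LStar.fls
  | p :: ps => LStar.dflt p ps

theorem LStar.toFml {At : Type} (c : Clause At) : LStar c.toFml := by
  refine LStar.impl (LStar.conjList fun F hF => ?_) (LStar.disjAtoms _)
  rcases List.mem_append.1 hF with h | h
  · obtain ⟨a, -, rfl⟩ := List.mem_map.1 h
    exact LStar.atom a
  · obtain ⟨C, -, rfl⟩ := List.mem_map.1 h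
    exact LStar.notConj C

theorem sat_conjList {At : Type} (I : Interp At) :
    ∀ L : List (Fml At), I.sat (conjList L) ↔ ∀ F ∈ L, I.sat F
  | [] => by simp [conjList, Interp.sat]
  | [F] => by simp [conjList]
  | F :: G :: Gs => by
    rw [List.forall_mem_cons, ← sat_conjList I (G :: Gs)]
    rfl

theorem sat_notConj_congr {At : Type} {M N : Interp At} (h : M.dflt = N.dflt) :
    ∀ E : List At, M.sat (notConj E) ↔ N.sat (notConj E)
  | [] => Iff.rfl
  | p :: ps => iff_of_eq (congrFun h (conjAtoms (p :: ps)))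

/-- The implications `not E1 ∧ … ∧ not Em → not E0` that one step of the construction adds to the
program when the current theory is `S`. -/
def stepRules {At : Type} (S : Set (Fml At)) : Set (Fml At) :=
  {F | ∃ (Es : List (List At)) (E0 : List At),
    F = Fml.impl (conjList (Es.map notConj)) (notConj E0) ∧
    MinEntails S
      (Fml.impl (conjList (Es.map (fun E => Fml.neg (conjAtoms E))))
        (Fml.neg (conjAtoms E0)))}

theorem LStar.of_mem_stepRules {At : Type} {S : Set (Fml At)} {F : Fml At}
    (hF : F ∈ stepRules S) : LStar F := by
  obtain ⟨Es, E0, rfl, -⟩ := hF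
  refine LStar.impl (LStar.conjList fun G hG => ?_) (LStar.notConj E0)
  obtain ⟨E, -, rfl⟩ := List.mem_map.1 hG
  exact LStar.notConj E

theorem satTheory_stepRules_congr {At : Type} {S : Set (Fml At)} {M N : Interp At}
    (h : M.dflt = N.dflt) (hM : M.satTheory (stepRules S)) : N.satTheory (stepRules S) := by
  rintro F hF
  have hMF := hM F hF
  obtain ⟨Es, E0, rfl, -⟩ := hF
  intro hN
  refine (sat_notConj_congr h E0).1 (hMF ?_)
  change N.sat (conjList _) at hN
  rw [sat_conjList, List.forall_mem_map] at hN ⊢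
  exact fun E hE => (sat_notConj_congr h E).2 (hN E hE)

/-- Restricting consequences to `L*_not` loses no premise, since program clauses and the added
implications all lie in `L*_not`. -/
theorem subset_PStep {At : Type} (P : Set (Clause At)) (S : Set (Fml At)) :
    Clause.toFml '' P ∪ stepRules S ⊆ PStep (Clause.toFml '' P) S := by
  intro F hF
  refine ⟨?_, fun I hI => hI F hF⟩
  rcases hF with ⟨c, -, rfl⟩ | hF
  · exact LStar.toFml c
  · exact LStar.of_mem_stepRules hF

theorem program_subset_PSeq {At : Type} (P : Set (Clause At)) :
    ∀ n : ℕ, Clause.toFml '' P ⊆ PSeq P n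
  | 0 => subset_rfl
  | n + 1 => Set.subset_union_left.trans (subset_PStep P (PSeq P n))

/-- Relative to the program, `P^n` constrains only the default part of an interpretation. -/
theorem satTheory_PSeq_of_dflt_eq {At : Type} {P : Set (Clause At)} {M N : Interp At}
    (h : M.dflt = N.dflt) (hN : N.satTheory (Clause.toFml '' P)) :
    ∀ {n : ℕ}, M.satTheory (PSeq P n) → N.satTheory (PSeq P n)
  | 0, _ => hN
  | n + 1, hM => by
    have hrules : N.satTheory (stepRules (PSeq P n)) :=
      satTheory_stepRules_congr h fun F hF => hM F (subset_PStep P _ (Or.inr hF))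
    exact fun F hF => hF.2 N fun G hG => hG.elim (hN G) (hrules G)

theorem IsMinModel.of_PSeq_succ {At : Type} {P : Set (Clause At)} {n : ℕ}
    (hsub : PSeq P n ⊆ PSeq P (n + 1)) {M : Interp At} (hM : IsMinModel (PSeq P (n + 1)) M) :
    IsMinModel (PSeq P n) M := by
  refine ⟨fun F hF => hM.1 F (hsub hF), fun N hN hNM => hM.2 N ?_ hNM⟩
  exact satTheory_PSeq_of_dflt_eq hNM.1.symm
    (fun F hF => hN F (program_subset_PSeq P n hF)) hM.1

/-- For every super logic program `P` and every natural number `n`,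
`P^n ⊆ P^{n+1}`: the sequence `(P^n)` is monotonically increasing. -/
theorem pseq_monotone {At : Type} (P : Set (Clause At)) (n : ℕ) :
    PSeq P n ⊆ PSeq P (n + 1) := by
  induction n with
  | zero => exact program_subset_PSeq P 1
  | succ n ih =>
    have hrules : stepRules (PSeq P n) ⊆ stepRules (PSeq P (n + 1)) := by
      rintro F ⟨Es, E0, rfl, hmin⟩
      exact ⟨Es, E0, rfl, fun M hM => hmin M (hM.of_PSeq_succ ih)⟩
    rintro F ⟨hF, hent⟩
    exact ⟨hF, fun I hI => hent I fun G hG => hI G (Set.union_subset_union_right _ hrules hG)⟩
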